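/- Let N be a positive integer with base-φ representation given by the finite set S of integers (so S contains no two consecutive integers and N = Σ_{i∈S} φ^i). Assume S contains at least one positive element, and let i be the smallest positive element of S. If i is odd, then N = Σ_{k∈S, k<0} (−1)^{|k|} L_{|k|} + d_0 − 1 (equivalently, N = Σ_{k∈S, k<0} L_k + d_0 − 1, with Lucas numbers extended to negative indices by L_{−n} = (−1)^n L_n). -/

import Mathlib

/-!
Conjugation in `ℤ[φ]` turns `N = ∑_{k ∈ S} φ^k` into `N = ∑_{k ∈ S} φ̄^k`
(`exists_int_sum`, together with the irrationality of `φ`). Put `A = ∑_{k ∈ S, k < 0} φ^k` and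
`B = ∑_{k ∈ S, k > 0} φ̄^k`. Then `∑_{k ∈ S, k < 0} L_k = A + N - d₀ - B`, so the claim is
`A - B = 1`, and `A - B` is an integer because Lucas numbers are. It therefore suffices that
`0 < A - B < 2`.

Both bounds come from `sum_zpow_lt`: a sum of powers of `φ` with pairwise nonconsecutive exponents
at most `m` is less than `φ^(m+1)`. It gives `0 ≤ A < 1` directly. Since `φ̄^k = (-1)^k φ^(-k)`, only
odd exponents contribute negatively to `B`, whence `-B < 1`; and since `i` is odd, every even
positive exponent is at least `i + 3`, so the term `-φ^(-i)` outweighs all the positive ones and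
`B < 0`.
-/

/-- The golden ratio φ = (1+√5)/2. -/
noncomputable def goldenPhi : ℝ := (1 + Real.sqrt 5) / 2

/-- The algebraic conjugate φ̄ = (1−√5)/2. -/
noncomputable def goldenPhiBar : ℝ := (1 - Real.sqrt 5) / 2

/-- Lucas numbers extended to all integer indices: L n = φ^n + φ̄^n. -/
noncomputable def LucasR (n : ℤ) : ℝ := goldenPhi ^ n + goldenPhiBar ^ n

lemma goldenPhi_pos : 0 < goldenPhi := Real.goldenRatio_pos

lemma one_lt_goldenPhi : 1 < goldenPhi := Real.one_lt_goldenRatio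

lemma goldenPhi_sq : goldenPhi ^ 2 = goldenPhi + 1 := Real.goldenRatio_sq

lemma goldenPhiBar_eq : goldenPhiBar = 1 - goldenPhi := by
  unfold goldenPhiBar goldenPhi; ring

lemma goldenPhi_inv : goldenPhi⁻¹ = goldenPhi - 1 := by
  refine inv_eq_of_mul_eq_one_right ?_
  linear_combination goldenPhi_sq

lemma goldenPhi_inv_eq_neg_bar : goldenPhi⁻¹ = -goldenPhiBar := by
  rw [goldenPhi_inv, goldenPhiBar_eq]; ring

lemma goldenPhiBar_zpow (k : ℤ) : goldenPhiBar ^ k = (-1) ^ k * goldenPhi ^ (-k) := by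
  rw [zpow_neg, ← inv_zpow, goldenPhi_inv_eq_neg_bar, ← mul_zpow]
  simp

lemma goldenPhi_zpow_add_one (m : ℤ) :
    goldenPhi ^ (m + 1) = goldenPhi ^ m + goldenPhi ^ (m - 1) := by
  rw [zpow_add_one₀ goldenPhi_pos.ne', zpow_sub_one₀ goldenPhi_pos.ne', goldenPhi_inv]
  ring

/-- A finite sum of powers of `φ` with nonconsecutive exponents at most `m` is less than
`φ^(m+1)`, by induction on the largest exponent. -/
lemma sum_zpow_lt (T : Finset ℤ) : (∀ k ∈ T, k + 1 ∉ T) → ∀ m : ℤ, (∀ k ∈ T, k ≤ m) →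
    ∑ k ∈ T, goldenPhi ^ k < goldenPhi ^ (m + 1) := by
  induction T using Finset.induction_on_max with
  | empty => intro _ m _; simpa using zpow_pos goldenPhi_pos _
  | insert a s hs ih =>
    intro hT m hm
    have ha : a ∉ s := fun h => lt_irrefl _ (hs a h)
    have h1 := ih (fun k hk hk1 => hT k (by simp [hk]) (by simp [hk1])) (a - 2) (by
      intro k hk
      have h2 := hs k hk
      have h3 : k + 1 ≠ a := fun h => hT k (by simp [hk]) (by simp [h])
      omega)
    rw [Finset.sum_insert ha]
    have h2 : goldenPhi ^ (a + 1) ≤ goldenPhi ^ (m + 1) :=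
      zpow_le_zpow_right₀ one_lt_goldenPhi.le (by have := hm a (by simp); omega)
    have h3 := goldenPhi_zpow_add_one a
    rw [show a - 2 + 1 = a - 1 by ring] at h1
    linarith

/-- The form of `sum_zpow_lt` for exponents bounded below, with the powers inverted. -/
lemma sum_zpow_neg_lt (T : Finset ℤ) (hT : ∀ k ∈ T, k + 1 ∉ T) (m : ℤ) (hm : ∀ k ∈ T, m ≤ k) :
    ∑ k ∈ T, goldenPhi ^ (-k) < goldenPhi ^ (1 - m) := by
  have h := sum_zpow_lt (T.image (fun k => -k)) (by
    intro k hk hk1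
    simp only [Finset.mem_image] at hk hk1
    obtain ⟨a, ha, rfl⟩ := hk
    obtain ⟨b, hb, hab⟩ := hk1
    exact hT b hb (by rwa [show b + 1 = a by omega])) (-m) (by
    intro k hk
    simp only [Finset.mem_image] at hk
    obtain ⟨a, ha, rfl⟩ := hk
    have := hm a ha
    omega)
  rw [Finset.sum_image (by intro a _ b _ h; simpa using h)] at h
  rwa [show 1 - m = -m + 1 by ring]

/-- A power of `φ` lies in `ℤ[φ]`, and the same power of `φ̄` is its conjugate. -/
lemma exists_int_zpow (k : ℤ) : ∃ a b : ℤ, goldenPhi ^ k = a + b * goldenPhi ∧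
    goldenPhiBar ^ k = a + b * goldenPhiBar := by
  have hb0 : goldenPhiBar ≠ 0 := Real.goldenConj_ne_zero
  have hbs : goldenPhiBar ^ 2 = goldenPhiBar + 1 := Real.goldenConj_sq
  have hbi : goldenPhiBar⁻¹ = goldenPhiBar - 1 := by
    refine inv_eq_of_mul_eq_one_right ?_
    linear_combination hbs
  induction k using Int.induction_on with
  | zero => exact ⟨1, 0, by simp, by simp⟩
  | succ n ih =>
    obtain ⟨a, b, h1, h2⟩ := ih
    refine ⟨b, a + b, ?_, ?_⟩
    · rw [zpow_add_one₀ goldenPhi_pos.ne', h1]; push_cast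
      linear_combination b * goldenPhi_sq
    · rw [zpow_add_one₀ hb0, h2]; push_cast
      linear_combination b * hbs
  | pred n ih =>
    obtain ⟨a, b, h1, h2⟩ := ih
    refine ⟨b - a, a, ?_, ?_⟩
    · rw [zpow_sub_one₀ goldenPhi_pos.ne', h1, goldenPhi_inv]; push_cast
      linear_combination b * goldenPhi_sq
    · rw [zpow_sub_one₀ hb0, h2, hbi]; push_cast
      linear_combination b * hbs

lemma exists_int_sum (T : Finset ℤ) : ∃ a b : ℤ, ∑ k ∈ T, goldenPhi ^ k = a + b * goldenPhi ∧
    ∑ k ∈ T, goldenPhiBar ^ k = a + b * goldenPhiBar := by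
  choose a b h1 h2 using exists_int_zpow
  refine ⟨∑ k ∈ T, a k, ∑ k ∈ T, b k, ?_, ?_⟩
  · push_cast; rw [Finset.sum_mul, ← Finset.sum_add_distrib]
    exact Finset.sum_congr rfl fun k _ => h1 k
  · push_cast; rw [Finset.sum_mul, ← Finset.sum_add_distrib]
    exact Finset.sum_congr rfl fun k _ => h2 k

/-- A base-`φ` expansion of a natural number is preserved by conjugation. -/
lemma sum_goldenPhiBar (N : ℕ) (S : Finset ℤ) (hrep : (N : ℝ) = ∑ k ∈ S, goldenPhi ^ k) :
    (N : ℝ) = ∑ k ∈ S, goldenPhiBar ^ k := by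
  obtain ⟨a, b, h1, h2⟩ := exists_int_sum S
  have hirr : Irrational goldenPhi := Real.goldenRatio_irrational
  have hb : b = 0 := by
    by_contra hb
    have h3 := (hirr.intCast_mul hb).intCast_add a
    rw [← h1, ← hrep] at h3
    exact N.not_irrational h3
  subst hb
  rw [h2, hrep, h1]; simp

lemma neg_one_pow_mul_lucas {k : ℤ} (hk : k < 0) :
    (-1 : ℝ) ^ k.natAbs * LucasR k.natAbs = goldenPhi ^ k + goldenPhiBar ^ k := by
  obtain ⟨n, rfl⟩ : ∃ n : ℕ, k = -n := ⟨k.natAbs, by omega⟩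
  have h1 : ((-1 : ℝ) ^ n) * (-1) ^ n = 1 := by rw [← mul_pow]; simp
  have h2 : ((-1 : ℝ) ^ n)⁻¹ = (-1) ^ n := inv_eq_of_mul_eq_one_right h1
  rw [Int.natAbs_neg, Int.natAbs_natCast, LucasR, goldenPhiBar_zpow, goldenPhiBar_zpow]
  simp only [neg_neg, zpow_neg, zpow_natCast, h2]
  linear_combination (goldenPhi ^ n)⁻¹ * h1

/-- The positive part of the conjugate expansion lies in `(-1, 0)` when its least exponent is
odd. -/
lemma sum_bar_bounds (P : Finset ℤ) (hP : ∀ k ∈ P, k + 1 ∉ P) (i : ℤ) (hi : i ∈ P) (hi0 : 0 < i)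
    (hmin : ∀ j ∈ P, i ≤ j) (hodd : Odd i) :
    -1 < ∑ k ∈ P, goldenPhiBar ^ k ∧ ∑ k ∈ P, goldenPhiBar ^ k < 0 := by
  have hsplit : ∑ k ∈ P, goldenPhiBar ^ k = ∑ k ∈ P with Even k, goldenPhi ^ (-k)
      - ∑ k ∈ P with ¬ Even k, goldenPhi ^ (-k) := by
    rw [← Finset.sum_filter_add_sum_filter_not P (fun k => Even k), sub_eq_add_neg,
      ← Finset.sum_neg_distrib]
    congr 1
    · refine Finset.sum_congr rfl fun k hk => ?_
      rw [goldenPhiBar_zpow, (Finset.mem_filter.1 hk).2.neg_one_zpow, one_mul]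
    · refine Finset.sum_congr rfl fun k hk => ?_
      rw [goldenPhiBar_zpow, (Int.not_even_iff_odd.1 (Finset.mem_filter.1 hk).2).neg_one_zpow,
        neg_one_mul]
  have hsub (p : ℤ → Prop) [DecidablePred p] : ∀ k ∈ P.filter p, k + 1 ∉ P.filter p :=
    fun k hk hk1 => hP k (Finset.mem_filter.1 hk).1 (Finset.mem_filter.1 hk1).1
  have hE0 : 0 ≤ ∑ k ∈ P with Even k, goldenPhi ^ (-k) :=
    Finset.sum_nonneg fun k _ => (zpow_pos goldenPhi_pos _).le
  have hO1 := sum_zpow_neg_lt _ (hsub fun k => ¬ Even k) 1 (by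
    intro k hk
    have := hmin k (Finset.mem_filter.1 hk).1
    omega)
  have hE1 := sum_zpow_neg_lt _ (hsub fun k => Even k) (i + 3) (by
    intro k hk
    obtain ⟨hk, hke⟩ := Finset.mem_filter.1 hk
    have h1 := hmin k hk
    have h2 : k ≠ i + 1 := fun h => hP i hi (h ▸ hk)
    obtain ⟨a, rfl⟩ := hke
    obtain ⟨b, rfl⟩ := hodd
    omega)
  have hO0 : goldenPhi ^ (-i) ≤ ∑ k ∈ P with ¬ Even k, goldenPhi ^ (-k) :=
    Finset.single_le_sum (f := fun k : ℤ => goldenPhi ^ (-k))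
      (fun k _ => (zpow_pos goldenPhi_pos _).le)
      (Finset.mem_filter.2 ⟨hi, Int.not_even_iff_odd.2 hodd⟩)
  have hlt : goldenPhi ^ (1 - (i + 3)) ≤ goldenPhi ^ (-i) :=
    zpow_le_zpow_right₀ one_lt_goldenPhi.le (by omega)
  simp only [sub_self, zpow_zero] at hO1
  rw [hsplit]
  constructor <;> linarith

/-- Theorem 2 (odd case): if the smallest positive index `i` in the base-φ
representation `S` of `N` is odd, then `N = Σ_{k∈S, k<0} (−1)^{|k|} L_{|k|} + d_0 − 1`. -/
theorem stmt_2 (N : ℕ) (hN : 0 < N) (S : Finset ℤ)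
    (hnc : ∀ k ∈ S, k + 1 ∉ S)
    (hrep : (N : ℝ) = ∑ k ∈ S, goldenPhi ^ k)
    (i : ℤ) (hiS : i ∈ S) (hipos : 0 < i)
    (hmin : ∀ j ∈ S, 0 < j → i ≤ j)
    (hodd : Odd i) :
    (N : ℝ) = (∑ k ∈ S.filter (fun k => k < 0),
        (-1 : ℝ) ^ (k.natAbs) * LucasR (k.natAbs)) +
      (if (0 : ℤ) ∈ S then 1 else 0) - 1 := by
  have hconj := sum_goldenPhiBar N S hrep
  have hL : ∑ k ∈ S.filter (fun k => k < 0), (-1 : ℝ) ^ (k.natAbs) * LucasR (k.natAbs)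
      = ∑ k ∈ S with k < 0, goldenPhi ^ k + ∑ k ∈ S with k < 0, goldenPhiBar ^ k := by
    rw [← Finset.sum_add_distrib]
    exact Finset.sum_congr rfl fun k hk => neg_one_pow_mul_lucas (Finset.mem_filter.1 hk).2
  have hsplit : ∑ k ∈ S, goldenPhiBar ^ k = ∑ k ∈ S with k < 0, goldenPhiBar ^ k
      + ((if (0 : ℤ) ∈ S then 1 else 0) + ∑ k ∈ S with 0 < k, goldenPhiBar ^ k) := by
    have h0 : (if (0 : ℤ) ∈ S then (1 : ℝ) else 0)
        = ∑ k ∈ S, if k = 0 then goldenPhiBar ^ k else 0 := by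
      rw [Finset.sum_ite_eq']; simp
    rw [h0, Finset.sum_filter, Finset.sum_filter, ← Finset.sum_add_distrib,
      ← Finset.sum_add_distrib]
    refine Finset.sum_congr rfl fun k _ => ?_
    rcases lt_trichotomy k 0 with h | h | h
    · simp [h, h.ne, h.not_gt]
    · simp [h]
    · simp [h, h.ne', h.not_gt]
  have hA0 : 0 ≤ ∑ k ∈ S with k < 0, goldenPhi ^ k :=
    Finset.sum_nonneg fun k _ => (zpow_pos goldenPhi_pos _).le
  have hA1 := sum_zpow_lt (S.filter fun k => k < 0)
    (fun k hk hk1 => hnc k (Finset.mem_filter.1 hk).1 (Finset.mem_filter.1 hk1).1) (-1)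
    (fun k hk => by have := (Finset.mem_filter.1 hk).2; omega)
  obtain ⟨hB1, hB0⟩ := sum_bar_bounds (S.filter fun k => 0 < k)
    (fun k hk hk1 => hnc k (Finset.mem_filter.1 hk).1 (Finset.mem_filter.1 hk1).1) i
    (Finset.mem_filter.2 ⟨hiS, hipos⟩) hipos
    (fun j hj => hmin j (Finset.mem_filter.1 hj).1 (Finset.mem_filter.1 hj).2) hodd
  rw [neg_add_cancel, zpow_zero] at hA1
  -- `z` is the integer `A - B`, i.e. the sum of the Lucas numbers plus `d₀ - N`.
  obtain ⟨z, hz⟩ : ∃ z : ℤ, (z : ℝ) = ∑ k ∈ S with k < 0, goldenPhi ^ k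
      - ∑ k ∈ S with 0 < k, goldenPhiBar ^ k := by
    obtain ⟨a, b, h1, h2⟩ := exists_int_sum (S.filter fun k => k < 0)
    refine ⟨2 * a + b + (if (0 : ℤ) ∈ S then 1 else 0) - N, ?_⟩
    push_cast
    rw [goldenPhiBar_eq] at h2
    rw [goldenPhiBar_eq] at hconj hsplit ⊢
    linarith
  have hz0 : 0 < z := by exact_mod_cast (by linarith : (0 : ℝ) < z)
  have hz2 : z < 2 := by exact_mod_cast (by linarith : (z : ℝ) < 2)
  obtain rfl : z = 1 := by omega
  push_cast at hz
  rw [hL]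
  linarith
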